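/- Every face of a spectrahedron is exposed: if A(t) = A_0 + t_1 A_1 + ⋯ + t_n A_n is a linear matrix polynomial and F is a face of S = S(A), then F is an exposed face of S. -/

import Mathlib

open MvPolynomial

/-- A face of a convex set `S ⊆ ℝⁿ`: a nonempty convex subset `F ⊆ S` such that whenever
`x, y ∈ S`, `λ ∈ (0,1)` and `λx + (1-λ)y ∈ F`, then `x, y ∈ F`. -/
def IsFaceOf {n : ℕ} (S F : Set (Fin n → ℝ)) : Prop :=
  F.Nonempty ∧ Convex ℝ F ∧ F ⊆ S ∧
    ∀ x ∈ S, ∀ y ∈ S, ∀ l : ℝ, 0 < l → l < 1 →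
      l • x + (1 - l) • y ∈ F → x ∈ F ∧ y ∈ F

/-- The affine-linear function `x ↦ c + a·x` on `ℝⁿ`. -/
def affEval {n : ℕ} (a : Fin n → ℝ) (c : ℝ) (x : Fin n → ℝ) : ℝ :=
  c + ∑ i, a i * x i

/-- `F` is an exposed face of `S`: either `F = S` or there is a nonzero affine-linear
function `ℓ` with `ℓ ≥ 0` on `S`, `{ℓ = 0} ∩ S ≠ ∅` and `{ℓ = 0} ∩ S = F`. -/
def IsExposedFaceOf {n : ℕ} (S F : Set (Fin n → ℝ)) : Prop :=
  F = S ∨ ∃ (a : Fin n → ℝ) (c : ℝ), affEval a c ≠ 0 ∧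
    (∀ x ∈ S, 0 ≤ affEval a c x) ∧
    ({x | affEval a c x = 0} ∩ S).Nonempty ∧
    {x | affEval a c x = 0} ∩ S = F

/-- The linear matrix polynomial `A(x) = A₀ + x₁A₁ + ⋯ + xₙAₙ` evaluated at `x`. -/
def matPoly {n k : ℕ} (A0 : Matrix (Fin k) (Fin k) ℝ) (A : Fin n → Matrix (Fin k) (Fin k) ℝ)
    (x : Fin n → ℝ) : Matrix (Fin k) (Fin k) ℝ :=
  A0 + ∑ i, x i • A i

/-- The spectrahedron `S(A) = {x ∈ ℝⁿ | A(x) ⪰ 0}`. -/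
def spectrahedron {n k : ℕ} (A0 : Matrix (Fin k) (Fin k) ℝ)
    (A : Fin n → Matrix (Fin k) (Fin k) ℝ) : Set (Fin n → ℝ) :=
  {x | (matPoly A0 A x).PosSemidef}

/-!
Let `F` be a convex extreme subset of the set `S` where an affine matrix pencil `L` is positive
semidefinite. The kernel of a sum of positive semidefinite matrices is the intersection of the
kernels, so some `x₀ ∈ F` has the smallest kernel `K` among all points of `F`. Summing the
quadratic forms `v⋆ L(x) v` over generators `v` of `K` gives an affine function of `x` which is
nonnegative on `S` and vanishes exactly where `K ≤ ker L(x)`, in particular on `F`. Conversely, if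
`x ∈ S` and `ker L(x₀) ≤ ker L(x)`, then `L(x₀)` dominates a positive multiple of `L(x)`, so the
segment from `x` to `x₀` extends beyond `x₀` inside `S`, and extremality puts `x` in `F`.
-/

section PosSemidef

open Matrix
open scoped ComplexOrder

theorem exists_mul_eq_of_ker_mulVecLin_le {K l m n : Type*} [Field K] [Fintype l] [Fintype m]
    {B : Matrix l m K} {C : Matrix n m K}
    (h : LinearMap.ker B.mulVecLin ≤ LinearMap.ker C.mulVecLin) :
    ∃ D : Matrix n l K, D * B = C := by
  classical
  obtain ⟨g, hg⟩ := LinearMap.exists_leftInverse_of_injective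
    ((LinearMap.ker B.mulVecLin).liftQ B.mulVecLin le_rfl)
    (Submodule.ker_liftQ_eq_bot _ _ _ le_rfl)
  refine ⟨LinearMap.toMatrix' ((LinearMap.ker B.mulVecLin).liftQ C.mulVecLin h ∘ₗ g), ?_⟩
  refine Matrix.toLin'.injective (LinearMap.ext fun v => ?_)
  have hgv : g (B *ᵥ v) = Submodule.Quotient.mk v :=
    LinearMap.congr_fun hg (Submodule.Quotient.mk v)
  rw [toLin'_mul, LinearMap.comp_apply, toLin'_toMatrix', toLin'_apply, LinearMap.comp_apply, hgv]
  rfl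

theorem exists_pos_posSemidef_smul_one_sub {𝕜 m : Type*} [RCLike 𝕜] [Finite m] [DecidableEq m]
    {M : Matrix m m 𝕜} (hM : M.IsHermitian) :
    ∃ c : ℝ, 0 < c ∧ (c • (1 : Matrix m m 𝕜) - M).PosSemidef := by
  have := Fintype.ofFinite m
  open scoped MatrixOrder in
  obtain ⟨b, hb⟩ := (finite_real_spectrum (A := M)).bddAbove
  have hle : M ≤ algebraMap ℝ (Matrix m m 𝕜) (max b 1) :=
    le_algebraMap_of_spectrum_le (fun r hr => (hb hr).trans (le_max_left b 1)) hM
  exact ⟨max b 1, by positivity, by rwa [Algebra.algebraMap_eq_smul_one] at hle⟩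

variable {𝕜 m : Type*} [RCLike 𝕜] [Fintype m] {M N : Matrix m m 𝕜}

theorem exists_eq_conjTranspose_mul_self_of_posSemidef (hM : M.PosSemidef) :
    ∃ B : Matrix m m 𝕜, M = Bᴴ * B := by
  classical
  open scoped MatrixOrder in
  exact CStarAlgebra.nonneg_iff_eq_star_mul_self.mp hM.nonneg

theorem exists_pos_posSemidef_sub_smul_of_ker_le (hM : M.PosSemidef) (hN : N.PosSemidef)
    (h : LinearMap.ker M.mulVecLin ≤ LinearMap.ker N.mulVecLin) :
    ∃ ε : ℝ, 0 < ε ∧ (M - ε • N).PosSemidef := by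
  classical
  obtain ⟨B, rfl⟩ := exists_eq_conjTranspose_mul_self_of_posSemidef hM
  obtain ⟨C, rfl⟩ := exists_eq_conjTranspose_mul_self_of_posSemidef hN
  rw [ker_mulVecLin_conjTranspose_mul_self, ker_mulVecLin_conjTranspose_mul_self] at h
  obtain ⟨D, rfl⟩ := exists_mul_eq_of_ker_mulVecLin_le h
  obtain ⟨c, hc, hD⟩ := exists_pos_posSemidef_smul_one_sub (isHermitian_conjTranspose_mul_self D)
  have hconj : Bᴴ * B - c⁻¹ • ((D * B)ᴴ * (D * B)) = c⁻¹ • (Bᴴ * (c • 1 - Dᴴ * D) * B) := by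
    simp [mul_sub, sub_mul, smul_sub, hc.ne', Matrix.mul_assoc]
  refine ⟨c⁻¹, inv_pos.2 hc, ?_⟩
  rw [hconj]
  exact (hD.conjTranspose_mul_mul_same B).smul (inv_nonneg.2 hc.le)

theorem exists_one_lt_posSemidef_lineMap_of_ker_le (hM : M.PosSemidef) (hN : N.PosSemidef)
    (h : LinearMap.ker M.mulVecLin ≤ LinearMap.ker N.mulVecLin) :
    ∃ t : ℝ, 1 < t ∧ (AffineMap.lineMap N M t : Matrix m m 𝕜).PosSemidef := by
  obtain ⟨ε, hε, hMN⟩ := exists_pos_posSemidef_sub_smul_of_ker_le hM hN h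
  have hline : (AffineMap.lineMap N M (1 + ε) : Matrix m m 𝕜) = (M - ε • N) + ε • M := by
    rw [AffineMap.lineMap_apply_module]
    module
  refine ⟨1 + ε, by linarith, ?_⟩
  rw [hline]
  exact hMN.add (hM.smul hε.le)

theorem ker_mulVecLin_add_of_posSemidef (hM : M.PosSemidef) (hN : N.PosSemidef) :
    LinearMap.ker (M + N).mulVecLin = LinearMap.ker M.mulVecLin ⊓ LinearMap.ker N.mulVecLin := by
  ext v
  simp only [Submodule.mem_inf, LinearMap.mem_ker, mulVecLin_apply]
  rw [← (hM.add hN).dotProduct_mulVec_zero_iff, ← hM.dotProduct_mulVec_zero_iff,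
    ← hN.dotProduct_mulVec_zero_iff, add_mulVec, dotProduct_add,
    add_eq_zero_iff_of_nonneg (hM.dotProduct_mulVec_nonneg v) (hN.dotProduct_mulVec_nonneg v)]

theorem ker_mulVecLin_smul {l : Type*} {c : ℝ} (hc : c ≠ 0) (M : Matrix l m 𝕜) :
    LinearMap.ker (c • M).mulVecLin = LinearMap.ker M.mulVecLin := by
  ext v
  simp [hc]

theorem exists_ker_mulVecLin_le_of_convex {C : Set (Matrix m m 𝕜)} (hconv : Convex ℝ C)
    (hne : C.Nonempty) (hpos : ∀ M ∈ C, M.PosSemidef) :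
    ∃ M ∈ C, ∀ N ∈ C, LinearMap.ker M.mulVecLin ≤ LinearMap.ker N.mulVecLin := by
  let kernels := (fun M : Matrix m m 𝕜 => LinearMap.ker M.mulVecLin) '' C
  have hdir : DirectedOn (fun V W => W ≤ V) kernels := by
    rintro _ ⟨M, hM, rfl⟩ _ ⟨N, hN, rfl⟩
    have hhalf : (0 : ℝ) < 1 / 2 := by norm_num
    have hker := ker_mulVecLin_add_of_posSemidef ((hpos M hM).smul hhalf.le)
      ((hpos N hN).smul hhalf.le)
    rw [ker_mulVecLin_smul hhalf.ne', ker_mulVecLin_smul hhalf.ne'] at hker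
    exact ⟨_, ⟨_, hconv hM hN hhalf.le hhalf.le (by norm_num), rfl⟩,
      hker.trans_le inf_le_left, hker.trans_le inf_le_right⟩
  obtain ⟨_, hmin⟩ := exists_minimal_of_wellFoundedLT (· ∈ kernels) (hne.image _)
  obtain ⟨M, hM, rfl⟩ := hmin.prop
  exact ⟨M, hM, fun N hN => hdir.le_of_minimal hmin ⟨N, hN, rfl⟩⟩

/-- The functional `M ↦ Re (v⋆ M v)`. It supports the positive semidefinite cone along the face of
matrices whose kernel contains `v`. Taking the real part makes it real-valued on all matrices, not
only on Hermitian ones. -/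
def reQuadForm (v : m → 𝕜) : StrongDual ℝ (Matrix m m 𝕜) where
  toFun M := RCLike.re (star v ⬝ᵥ M *ᵥ v)
  map_add' M N := by rw [add_mulVec, dotProduct_add, map_add]
  map_smul' c M := by rw [smul_mulVec, dotProduct_smul, RCLike.smul_re]; rfl
  cont := by fun_prop

theorem reQuadForm_nonneg (hM : M.PosSemidef) (v : m → 𝕜) : 0 ≤ reQuadForm v M :=
  hM.re_dotProduct_nonneg v

theorem reQuadForm_eq_zero_iff (hM : M.PosSemidef) (v : m → 𝕜) :
    reQuadForm v M = 0 ↔ v ∈ LinearMap.ker M.mulVecLin := by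
  rw [LinearMap.mem_ker, mulVecLin_apply, ← hM.dotProduct_mulVec_zero_iff]
  have him := (RCLike.nonneg_iff.1 (hM.dotProduct_mulVec_nonneg v)).2
  exact ⟨fun hre => RCLike.ext (hre.trans (map_zero _).symm) (him.trans (map_zero _).symm),
    fun h => (congrArg RCLike.re h).trans (map_zero _)⟩

theorem exists_strongDual_eq_zero_iff_le_ker (V : Submodule 𝕜 (m → 𝕜)) :
    ∃ φ : StrongDual ℝ (Matrix m m 𝕜), ∀ M : Matrix m m 𝕜, M.PosSemidef →
      0 ≤ φ M ∧ (φ M = 0 ↔ V ≤ LinearMap.ker M.mulVecLin) := by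
  obtain ⟨s, rfl⟩ := IsNoetherian.noetherian V
  refine ⟨∑ v ∈ s, reQuadForm v, fun M hM => ?_⟩
  have hnonneg : ∀ v ∈ s, 0 ≤ reQuadForm v M := fun v _ => reQuadForm_nonneg hM v
  rw [_root_.sum_apply, Finset.sum_eq_zero_iff_of_nonneg hnonneg, Submodule.span_le]
  exact ⟨Finset.sum_nonneg hnonneg, forall₂_congr fun v _ => reQuadForm_eq_zero_iff hM v⟩

end PosSemidef

section Faces

theorem mem_of_isExtreme_of_lineMap_mem {R E : Type*} [Field R] [LinearOrder R]
    [IsStrictOrderedRing R] [AddCommGroup E] [Module R E] {S F : Set E} (hF : IsExtreme R S F)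
    {x z : E} (hx : x ∈ S) (hz : z ∈ F) {t : R} (ht : 1 < t)
    (hxz : AffineMap.lineMap x z t ∈ S) : x ∈ F := by
  refine hF.left_mem_of_mem_openSegment hx hxz hz ?_
  have hmem := lineMap_mem_openSegment R x (AffineMap.lineMap x z t)
    ⟨inv_pos.2 (zero_lt_one.trans ht), inv_lt_one_of_one_lt₀ ht⟩
  rwa [AffineMap.lineMap_lineMap_right, inv_mul_cancel₀ (by positivity),
    AffineMap.lineMap_apply_one] at hmem

variable {E : Type*} [AddCommGroup E] [Module ℝ E] [TopologicalSpace E] [IsTopologicalAddGroup E]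
  {S F : Set E}

theorem isExposed_sep_eq_zero_of_nonneg {ψ : E →ᴬ[ℝ] ℝ} (hψ : ∀ x ∈ S, 0 ≤ ψ x) :
    IsExposed ℝ S {x ∈ S | ψ x = 0} := by
  rintro ⟨z, hzS, hz⟩
  refine ⟨-ψ.contLinear, Set.ext fun x => and_congr_right fun hxS => ?_⟩
  have hle : ∀ y, (-ψ.contLinear) y ≤ (-ψ.contLinear) x ↔ ψ x ≤ ψ y := by
    intro y
    have hxy := ψ.contLinear_map_vsub x y
    simp only [vsub_eq_sub, map_sub] at hxy
    simp only [neg_apply]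
    constructor <;> intro <;> linarith
  simp only [hle]
  exact ⟨fun hx y hy => hx.trans_le (hψ y hy), fun hx => le_antisymm (hz ▸ hx z hzS) (hψ x hxS)⟩

open scoped ComplexOrder in
theorem spectrahedron_faces_exposed_general {𝕜 m : Type*} [RCLike 𝕜] [Finite m]
    (L : E →ᴬ[ℝ] Matrix m m 𝕜) (hF : IsExtreme ℝ {x | (L x).PosSemidef} F) (hconv : Convex ℝ F) :
    IsExposed ℝ {x | (L x).PosSemidef} F := by
  have := Fintype.ofFinite m
  intro hne
  obtain ⟨_, ⟨x₀, hx₀, rfl⟩, hker⟩ := exists_ker_mulVecLin_le_of_convex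
    (hconv.affine_image L.toAffineMap) (hne.image L) (Set.forall_mem_image.2 hF.subset)
  obtain ⟨φ, hφ⟩ := exists_strongDual_eq_zero_iff_le_ker (LinearMap.ker (L x₀).mulVecLin)
  have hF_eq : F = {x ∈ {x | (L x).PosSemidef} | φ.toContinuousAffineMap.comp L x = 0} := by
    refine Set.Subset.antisymm (fun x hx => ⟨hF.subset hx, ?_⟩) fun x ⟨hxS, hx⟩ => ?_
    · exact (hφ _ (hF.subset hx)).2.2 (hker _ ⟨x, hx, rfl⟩)
    · obtain ⟨t, ht, hpos⟩ := exists_one_lt_posSemidef_lineMap_of_ker_le (hF.subset hx₀) hxS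
        ((hφ _ hxS).2.1 hx)
      refine mem_of_isExtreme_of_lineMap_mem hF hxS hx₀ ht ?_
      rwa [← L.coe_toAffineMap, ← AffineMap.apply_lineMap] at hpos
  have hexp : IsExposed ℝ {x | (L x).PosSemidef} F := by
    rw [hF_eq]
    exact isExposed_sep_eq_zero_of_nonneg fun x hx => (hφ (L x) hx).1
  exact hexp hne

end Faces

section Coordinates

variable {n k : ℕ} {S F : Set (Fin n → ℝ)}

theorem IsFaceOf.isExtreme (hF : IsFaceOf S F) : IsExtreme ℝ S F := by
  obtain ⟨-, -, hsub, hface⟩ := hF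
  refine ⟨hsub, ?_⟩
  rintro x hx y hy _ hz ⟨a, b, ha, hb, hab, rfl⟩
  obtain rfl : b = 1 - a := by linarith
  exact (hface x hx y hy a ha (by linarith) hz).1

theorem affEval_neg_single (l : StrongDual ℝ (Fin n → ℝ)) (c : ℝ) (x : Fin n → ℝ) :
    affEval (fun i => -l (Pi.single i 1)) c x = c - l x := by
  have hl : l x = ∑ i, l (Pi.single i 1) * x i := by
    conv_lhs => rw [pi_eq_sum_univ' x, map_sum]
    simp [mul_comm]
  simp [affEval, hl, sub_eq_add_neg]

theorem isExposedFaceOf_of_isExposed (hF : IsExposed ℝ S F) (hne : F.Nonempty) :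
    IsExposedFaceOf S F := by
  obtain ⟨l, rfl⟩ := hF hne
  obtain ⟨z, hzS, hz⟩ := hne
  have hface : {x ∈ S | ∀ y ∈ S, l y ≤ l x} =
      {x | affEval (fun i => -l (Pi.single i 1)) (l z) x = 0} ∩ S := by
    ext x
    rw [Set.inter_comm]
    refine and_congr_right fun hxS => ?_
    rw [Set.mem_ofPred_eq, affEval_neg_single, sub_eq_zero]
    exact ⟨fun hx => (hx z hzS).antisymm (hz x hxS), fun hx y hy => (hz y hy).trans_eq hx⟩
  rw [hface]
  by_cases hzero : affEval (fun i => -l (Pi.single i 1)) (l z) = 0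
  · exact .inl (by simp [hzero])
  · refine .inr ⟨_, _, hzero, fun x hx => ?_, hface ▸ ⟨z, hzS, hz⟩, rfl⟩
    rw [affEval_neg_single]
    exact sub_nonneg.2 (hz x hx)

/-- The linear matrix polynomial `matPoly A0 A` bundled as a continuous affine map, so that its
spectrahedron is the positivity set of an affine matrix pencil. -/
def matPolyAffineMap (A0 : Matrix (Fin k) (Fin k) ℝ) (A : Fin n → Matrix (Fin k) (Fin k) ℝ) :
    (Fin n → ℝ) →ᴬ[ℝ] Matrix (Fin k) (Fin k) ℝ :=
  ContinuousAffineMap.const ℝ _ A0 +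
    (∑ i, (ContinuousLinearMap.proj (R := ℝ) i).smulRight (A i)).toContinuousAffineMap

theorem matPolyAffineMap_apply (A0 : Matrix (Fin k) (Fin k) ℝ)
    (A : Fin n → Matrix (Fin k) (Fin k) ℝ) (x : Fin n → ℝ) :
    matPolyAffineMap A0 A x = matPoly A0 A x := by
  simp [matPolyAffineMap, matPoly]

theorem spectrahedron_eq_setOf_posSemidef (A0 : Matrix (Fin k) (Fin k) ℝ)
    (A : Fin n → Matrix (Fin k) (Fin k) ℝ) :
    spectrahedron A0 A = {x | (matPolyAffineMap A0 A x).PosSemidef} := by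
  simp only [spectrahedron, matPolyAffineMap_apply]

end Coordinates

/-- Every face of a spectrahedron is exposed. -/
theorem spectrahedron_faces_exposed {n k : ℕ}
    (A0 : Matrix (Fin k) (Fin k) ℝ) (A : Fin n → Matrix (Fin k) (Fin k) ℝ)
    (hA0 : A0.IsSymm) (hA : ∀ i, (A i).IsSymm) (S : Set (Fin n → ℝ))
    (hS : S = spectrahedron A0 A) :
    ∀ F : Set (Fin n → ℝ), IsFaceOf S F → IsExposedFaceOf S F := by
  intro F hF
  rw [hS, spectrahedron_eq_setOf_posSemidef] at hF ⊢
  exact isExposedFaceOf_of_isExposed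
    (spectrahedron_faces_exposed_general (matPolyAffineMap A0 A) hF.isExtreme hF.2.1) hF.1
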